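/- arXiv:1811.04739 — 2 statements merged into one kernel-verified Lean document; each statement's English description precedes it below -/
import Mathlib

section
/- Let H₁ and H₂ be complex Hilbert spaces, let A : H₁ → H₁ and B : H₂ → H₂ be bounded positive (i.e. nonnegative selfadjoint) operators, and let T : H₁ → H₂ be a bounded linear operator such that ‖B(Tu)‖ ≤ M‖Au‖ for all u ∈ H₁, where M ≥ 0. Then for every a ∈ (0,1) one has ‖B^a(Tu)‖ ≤ M^a · ‖T‖^{1−a} · ‖A^a u‖ for all u ∈ H₁, where A^a and B^a denote the a-th powers of A and B given by the continuous functional calculus (real power of a nonnegative operator). -/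
/-!
By Löwner's integral representation applied to `(A ^ 2) ^ a = (A ^ a) ^ 2`, the form `‖A ^ a u‖ ^ 2`
is an integral over `t > 0` of the infima of `‖A v‖ ^ 2 + t * ‖u - v‖ ^ 2` over `v`, weighted by
`t ^ (a - 2)`; the infimum is attained at `v = t (t + A ^ 2)⁻¹ u`. If `‖T‖ ≤ 1` and
`‖B (T v)‖ ≤ ‖A v‖` for all `v`, then testing the infimum for `B` at `T u` with `T v` shows that it
is at most the infimum for `A` at `u`. Integrating in `t` gives the inequality for contractions, and
scaling gives the rest.
-/

open MeasureTheory Set ContinuousLinearMap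
open Real (rpowIntegrand₀₁)
open scoped InnerProduct InnerProductSpace NNReal

section CStarAlgebra

variable {𝓐 : Type*} [CStarAlgebra 𝓐] [PartialOrder 𝓐] [StarOrderedRing 𝓐]

theorem smul_rpow_of_nonneg {a : 𝓐} {c p : ℝ} (ha : 0 ≤ a) (hc : 0 ≤ c) (hp : 0 ≤ p) :
    (c • a) ^ p = c ^ p • a ^ p := by
  have hpow (s : Set ℝ) : ContinuousOn (fun x : ℝ ↦ x ^ p) s :=
    (Real.continuous_rpow_const hp).continuousOn
  have : 0 ≤ c • a := smul_nonneg hc ha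
  rw [CFC.rpow_eq_cfc_real, CFC.rpow_eq_cfc_real, ← cfc_comp_smul c _ a (hpow _),
    ← cfc_smul _ _ a (hpow _)]
  refine cfc_congr fun x hx ↦ ?_
  simp only [smul_eq_mul, Real.mul_rpow hc (spectrum_nonneg_of_nonneg ha hx)]

theorem sq_rpow_eq_rpow_sq {a : 𝓐} {p : ℝ} (ha : 0 ≤ a) (hp : 0 ≤ p) :
    (a ^ 2) ^ p = (a ^ p) ^ 2 := by
  rw [← CFC.rpow_natCast a 2, ← CFC.rpow_natCast (a ^ p) 2 CFC.rpow_nonneg,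
    CFC.rpow_rpow_of_exponent_nonneg a _ _ (Nat.cast_nonneg 2) hp,
    CFC.rpow_rpow_of_exponent_nonneg a _ _ hp (Nat.cast_nonneg 2), mul_comm]

theorem exists_cfcₙ_rpowIntegrand₀₁_eq_smul_one_sub {a : 𝓐} {t : ℝ} (ha : 0 ≤ a) (ht : 0 < t)
    (p : ℝ) :
    ∃ w : 𝓐, a * w = t • (1 - w) ∧ cfcₙ (rpowIntegrand₀₁ p t) a = t ^ (p - 1) • (1 - w) := by
  have hne : ∀ x ∈ spectrum ℝ a, t + x ≠ 0 := fun x hx ↦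
    (add_pos_of_pos_of_nonneg ht (spectrum_nonneg_of_nonneg ha hx)).ne'
  have hne' : ∀ x ∈ quasispectrum ℝ a, t + x ≠ 0 := fun x hx ↦
    (add_pos_of_pos_of_nonneg ht (quasispectrum_nonneg_of_nonneg a ha x hx)).ne'
  have hw : ContinuousOn (fun x : ℝ ↦ t / (t + x)) (spectrum ℝ a) := by
    fun_prop (disch := assumption)
  have hF : ContinuousOn (rpowIntegrand₀₁ p t) (quasispectrum ℝ a) := by
    unfold rpowIntegrand₀₁
    fun_prop (disch := assumption)
  have one_sub_w : 1 - cfc (fun x : ℝ ↦ t / (t + x)) a = cfc (fun x : ℝ ↦ 1 - t / (t + x)) a := by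
    rw [cfc_sub (fun _ ↦ 1) _ a, cfc_const_one ℝ a]
  refine ⟨cfc (fun x : ℝ ↦ t / (t + x)) a, ?_, ?_⟩
  · calc a * cfc (fun x : ℝ ↦ t / (t + x)) a
      _ = cfc (fun x : ℝ ↦ x * (t / (t + x))) a := by rw [cfc_mul (fun x ↦ x) _ a, cfc_id' ℝ a]
      _ = cfc (fun x : ℝ ↦ t • (1 - t / (t + x))) a := cfc_congr fun x hx ↦ by
        have := hne x hx
        simp only [smul_eq_mul]
        field_simp
        ring
      _ = _ := by rw [cfc_smul .., one_sub_w]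
  · calc cfcₙ (rpowIntegrand₀₁ p t) a
      _ = cfc (rpowIntegrand₀₁ p t) a := cfcₙ_eq_cfc hF Real.rpowIntegrand₀₁_zero_right
      _ = cfc (fun x : ℝ ↦ t ^ (p - 1) • (1 - t / (t + x))) a := cfc_congr fun x hx ↦ by
        have := hne x hx
        simp only [rpowIntegrand₀₁, Real.rpow_sub_one ht.ne', smul_eq_mul]
        field_simp
      _ = _ := by rw [cfc_smul .., one_sub_w]

-- The measure in the library's representation depends on the algebra, so it is applied to `(a, b)`
-- in the product algebra: both powers are then integrals against the same measure.
theorem exists_measure_rpow_eq_integral_cfcₙ_rpowIntegrand₀₁_pair {𝓑 : Type*} [CStarAlgebra 𝓑]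
    [PartialOrder 𝓑] [StarOrderedRing 𝓑] {p : ℝ} (hp : p ∈ Ioo 0 1) {a : 𝓐} {b : 𝓑}
    (ha : 0 ≤ a) (hb : 0 ≤ b) :
    ∃ μ : Measure ℝ,
      (IntegrableOn (fun t ↦ cfcₙ (rpowIntegrand₀₁ p t) a) (Ioi 0) μ ∧
        a ^ p = ∫ t in Ioi 0, cfcₙ (rpowIntegrand₀₁ p t) a ∂μ) ∧
      (IntegrableOn (fun t ↦ cfcₙ (rpowIntegrand₀₁ p t) b) (Ioi 0) μ ∧
        b ^ p = ∫ t in Ioi 0, cfcₙ (rpowIntegrand₀₁ p t) b ∂μ) := by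
  lift p to ℝ≥0 using hp.1.le
  have hp0 : 0 < p := by exact_mod_cast hp.1
  have hab : 0 ≤ (a, b) := ⟨ha, hb⟩
  obtain ⟨μ, hμ⟩ := CFC.exists_measure_nnrpow_eq_integral_cfcₙ_rpowIntegrand₀₁ (𝓐 × 𝓑)
    (p := p) (by exact_mod_cast hp)
  obtain ⟨hintegrable, heq⟩ := hμ (a, b) hab
  have hsplit : EqOn (fun t ↦ cfcₙ (rpowIntegrand₀₁ p t) (a, b))
      (fun t ↦ (cfcₙ (rpowIntegrand₀₁ p t) a, cfcₙ (rpowIntegrand₀₁ p t) b)) (Ioi 0) := by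
    intro t ht
    refine cfcₙ_map_prod (S := ℝ) _ a b ?_
    refine (Real.continuousOn_rpowIntegrand₀₁_Ici hp ht).mono (union_subset ?_ ?_)
    · exact fun x hx ↦ quasispectrum_nonneg_of_nonneg a ha x hx
    · exact fun x hx ↦ quasispectrum_nonneg_of_nonneg b hb x hx
  rw [setIntegral_congr_fun measurableSet_Ioi hsplit] at heq
  replace hintegrable := hintegrable.congr_fun hsplit measurableSet_Ioi
  replace heq : (a ^ p, b ^ p) = _ := (CFC.nnrpow_map_prod ha hb).symm.trans heq
  refine ⟨μ, ⟨hintegrable.fst, ?_⟩, ⟨hintegrable.snd, ?_⟩⟩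
  · rw [← CFC.nnrpow_eq_rpow hp0, ← fst_integral hintegrable]
    exact congrArg Prod.fst heq
  · rw [← CFC.nnrpow_eq_rpow hp0, ← snd_integral hintegrable]
    exact congrArg Prod.snd heq

end CStarAlgebra

section LoewnerOrder

variable {𝕜 E F : Type*} [RCLike 𝕜] [NormedAddCommGroup E] [InnerProductSpace 𝕜 E]
  [NormedAddCommGroup F] [InnerProductSpace 𝕜 F]

theorem reApplyInnerSelf_ofReal_smul (c : ℝ) (X : E →L[𝕜] E) (u : E) :
    ((c : 𝕜) • X).reApplyInnerSelf u = c * X.reApplyInnerSelf u := by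
  simp only [reApplyInnerSelf_apply, smul_apply, inner_smul_left, RCLike.conj_ofReal,
    RCLike.re_ofReal_mul]

theorem isLeast_reApplyInnerSelf_add_norm_sub_sq {X : E →L[𝕜] E} (hX : X.IsPositive) {t : ℝ}
    (ht : 0 ≤ t) {u w : E} (hw : X w = (t : 𝕜) • (u - w)) :
    IsLeast (range fun v ↦ X.reApplyInnerSelf v + t * ‖u - v‖ ^ 2)
      (t * RCLike.re ⟪u - w, u⟫_𝕜) := by
  have hXw (y : E) : RCLike.re ⟪X w, y⟫_𝕜 = t * RCLike.re ⟪u - w, y⟫_𝕜 := by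
    rw [hw, inner_smul_left, RCLike.conj_ofReal, RCLike.re_ofReal_mul]
  have value_at_w : X.reApplyInnerSelf w + t * ‖u - w‖ ^ 2 = t * RCLike.re ⟪u - w, u⟫_𝕜 := by
    rw [reApplyInnerSelf_apply, hXw, ← inner_self_eq_norm_sq (𝕜 := 𝕜), ← mul_add, ← map_add,
      ← inner_add_right, add_sub_cancel]
  have expand_at_w (v : E) : X.reApplyInnerSelf v + t * ‖u - v‖ ^ 2 =
      X.reApplyInnerSelf w + t * ‖u - w‖ ^ 2 +
        (X.reApplyInnerSelf (v - w) + t * ‖v - w‖ ^ 2) := by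
    have hsymm : RCLike.re ⟪X v, w⟫_𝕜 = RCLike.re ⟪X w, v⟫_𝕜 := by
      rw [hX.inner_left_eq_inner_right, inner_re_symm]
    have hnorm := norm_sub_sq (𝕜 := 𝕜) (u - w) (v - w)
    rw [sub_sub_sub_cancel_right] at hnorm
    simp only [reApplyInnerSelf_apply, map_sub, inner_sub_left (X v), inner_sub_right, hsymm, hXw,
      hnorm]
    ring
  refine ⟨⟨w, value_at_w⟩, forall_mem_range.2 fun v ↦ ?_⟩
  rw [← value_at_w, expand_at_w v]
  have := hX.2 (v - w)
  exact le_add_of_nonneg_right (by positivity)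

variable [CompleteSpace E] [CompleteSpace F]

theorem reApplyInnerSelf_adjoint_comp_comp (T : E →L[𝕜] F) (Y : F →L[𝕜] F) (u : E) :
    (T† ∘L Y ∘L T).reApplyInnerSelf u = Y.reApplyInnerSelf (T u) := by
  simp only [reApplyInnerSelf_apply, comp_apply, adjoint_inner_left]

theorem reApplyInnerSelf_sq {A : E →L[𝕜] E} (hA : IsSelfAdjoint A) (u : E) :
    (A ^ 2).reApplyInnerSelf u = ‖A u‖ ^ 2 := by
  rw [apply_norm_sq_eq_inner_adjoint_left, hA.adjoint_eq, sq]
  rfl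

theorem le_iff_forall_reApplyInnerSelf_le {X Y : E →L[𝕜] E} (hX : IsSelfAdjoint X)
    (hY : IsSelfAdjoint Y) : X ≤ Y ↔ ∀ u, X.reApplyInnerSelf u ≤ Y.reApplyInnerSelf u := by
  have hsub (u : E) :
      (Y - X).reApplyInnerSelf u = Y.reApplyInnerSelf u - X.reApplyInnerSelf u := by
    simp only [reApplyInnerSelf_apply, sub_apply, inner_sub_left, map_sub]
  simp only [le_def, isPositive_def', hY.sub hX, true_and, hsub, sub_nonneg]

theorem nonneg_of_adjoint_comp_comp_le {T : E →L[𝕜] F} {X : E →L[𝕜] E} {Y : F →L[𝕜] F}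
    (hY : 0 ≤ Y) (hYX : T† ∘L Y ∘L T ≤ X) : 0 ≤ X :=
  ((nonneg_iff_isPositive _).2 (((nonneg_iff_isPositive Y).1 hY).adjoint_conj T)).trans hYX

end LoewnerOrder

section Operator

variable {E F : Type*} [NormedAddCommGroup E] [InnerProductSpace ℂ E] [CompleteSpace E]
  [NormedAddCommGroup F] [InnerProductSpace ℂ F] [CompleteSpace F]

theorem isLeast_reApplyInnerSelf_cfcₙ_rpowIntegrand₀₁ {X : E →L[ℂ] E} (hX : 0 ≤ X) {t : ℝ}
    (ht : 0 < t) (p : ℝ) (u : E) :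
    IsLeast (range fun v ↦ t ^ (p - 2) * (X.reApplyInnerSelf v + t * ‖u - v‖ ^ 2))
      ((cfcₙ (rpowIntegrand₀₁ p t) X).reApplyInnerSelf u) := by
  obtain ⟨W, hW, hF⟩ := exists_cfcₙ_rpowIntegrand₀₁_eq_smul_one_sub hX ht p
  have hWu : X (W u) = (t : ℂ) • (u - W u) := by
    simpa using congr($hW u)
  have hFu : (cfcₙ (rpowIntegrand₀₁ p t) X).reApplyInnerSelf u =
      t ^ (p - 2) * (t * RCLike.re ⟪u - W u, u⟫_ℂ) := by
    rw [hF, RCLike.real_smul_eq_coe_smul (K := ℂ), reApplyInnerSelf_ofReal_smul, ← mul_assoc,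
      ← Real.rpow_add_one ht.ne', show p - 2 + 1 = p - 1 by ring]
    rfl
  have hmono : Monotone (fun x : ℝ ↦ t ^ (p - 2) * x) :=
    monotone_mul_left_of_nonneg (by positivity)
  have hleast := hmono.map_isLeast <| isLeast_reApplyInnerSelf_add_norm_sub_sq
    ((nonneg_iff_isPositive X).1 hX) ht.le hWu
  rwa [← range_comp, ← hFu] at hleast

theorem adjoint_comp_cfcₙ_rpowIntegrand₀₁_comp_le {T : E →L[ℂ] F} (hT : ‖T‖ ≤ 1)
    {X : E →L[ℂ] E} {Y : F →L[ℂ] F} (hY : 0 ≤ Y) (hYX : T† ∘L Y ∘L T ≤ X) {t : ℝ} (ht : 0 < t)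
    (p : ℝ) :
    T† ∘L cfcₙ (rpowIntegrand₀₁ p t) Y ∘L T ≤ cfcₙ (rpowIntegrand₀₁ p t) X := by
  have hX : 0 ≤ X := nonneg_of_adjoint_comp_comp_le hY hYX
  have hFY : IsSelfAdjoint (cfcₙ (rpowIntegrand₀₁ p t) Y) := IsSelfAdjoint.cfcₙ
  refine (le_iff_forall_reApplyInnerSelf_le (hFY.adjoint_conj T) IsSelfAdjoint.cfcₙ).2 fun u ↦ ?_
  obtain ⟨v, hv⟩ := (isLeast_reApplyInnerSelf_cfcₙ_rpowIntegrand₀₁ hX ht p u).1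
  have hYXv : Y.reApplyInnerSelf (T v) ≤ X.reApplyInnerSelf v := by
    rw [← reApplyInnerSelf_adjoint_comp_comp]
    exact (le_iff_forall_reApplyInnerSelf_le (hY.isSelfAdjoint.adjoint_conj T)
      hX.isSelfAdjoint).1 hYX v
  have hTuv : ‖T u - T v‖ ≤ ‖u - v‖ := by
    simpa only [map_sub, one_mul] using T.le_of_opNorm_le hT (u - v)
  calc (T† ∘L cfcₙ (rpowIntegrand₀₁ p t) Y ∘L T).reApplyInnerSelf u
    _ = (cfcₙ (rpowIntegrand₀₁ p t) Y).reApplyInnerSelf (T u) :=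
      reApplyInnerSelf_adjoint_comp_comp T _ u
    _ ≤ t ^ (p - 2) * (Y.reApplyInnerSelf (T v) + t * ‖T u - T v‖ ^ 2) :=
      (isLeast_reApplyInnerSelf_cfcₙ_rpowIntegrand₀₁ hY ht p (T u)).2 ⟨T v, rfl⟩
    _ ≤ t ^ (p - 2) * (X.reApplyInnerSelf v + t * ‖u - v‖ ^ 2) := by gcongr
    _ = (cfcₙ (rpowIntegrand₀₁ p t) X).reApplyInnerSelf u := hv

theorem adjoint_comp_rpow_comp_le_rpow {T : E →L[ℂ] F} (hT : ‖T‖ ≤ 1)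
    {X : E →L[ℂ] E} {Y : F →L[ℂ] F} (hY : 0 ≤ Y) (hYX : T† ∘L Y ∘L T ≤ X) {p : ℝ}
    (hp : p ∈ Ioo 0 1) :
    T† ∘L (Y ^ p) ∘L T ≤ X ^ p := by
  obtain ⟨μ, ⟨hXint, hXp⟩, hYint, hYp⟩ :=
    exists_measure_rpow_eq_integral_cfcₙ_rpowIntegrand₀₁_pair hp
      (nonneg_of_adjoint_comp_comp_le hY hYX) hY
  let conj : (F →L[ℂ] F) →L[ℂ] (E →L[ℂ] E) := compL ℂ E F E (T†) ∘L (compL ℂ E F F).flip T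
  calc T† ∘L (Y ^ p) ∘L T
    _ = conj (∫ t in Ioi 0, cfcₙ (rpowIntegrand₀₁ p t) Y ∂μ) := by rw [hYp]; rfl
    _ = ∫ t in Ioi 0, conj (cfcₙ (rpowIntegrand₀₁ p t) Y) ∂μ := (conj.integral_comp_comm hYint).symm
    _ ≤ ∫ t in Ioi 0, cfcₙ (rpowIntegrand₀₁ p t) X ∂μ :=
      setIntegral_mono_on (conj.integrable_comp hYint) hXint measurableSet_Ioi fun _ ht ↦
        adjoint_comp_cfcₙ_rpowIntegrand₀₁_comp_le hT hY hYX ht p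
    _ = X ^ p := hXp.symm

theorem adjoint_smul_comp_comp_smul (c : ℝ) (T : E →L[ℂ] F) (Y : F →L[ℂ] F) :
    (c • T)† ∘L Y ∘L (c • T) = c ^ 2 • (T† ∘L Y ∘L T) := by
  have hadj : (c • T)† = c • T† := by
    rw [← Complex.coe_smul, map_smulₛₗ, Complex.conj_ofReal, Complex.coe_smul]
  rw [hadj, smul_comp, comp_smul, comp_smul, smul_smul, sq]

theorem adjoint_comp_rpow_comp_le_norm_rpow_smul_rpow {T : E →L[ℂ] F}
    {X : E →L[ℂ] E} {Y : F →L[ℂ] F} (hY : 0 ≤ Y) (hYX : T† ∘L Y ∘L T ≤ X) {p : ℝ}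
    (hp : p ∈ Ioo 0 1) :
    T† ∘L (Y ^ p) ∘L T ≤ (‖T‖ ^ (1 - p)) ^ 2 • X ^ p := by
  rcases eq_or_ne T 0 with rfl | hT
  · rw [comp_zero, comp_zero]
    exact smul_nonneg (sq_nonneg _) CFC.rpow_nonneg
  have hc : 0 < ‖T‖ := norm_pos_iff.2 hT
  obtain ⟨S, hS, hTS⟩ : ∃ S : E →L[ℂ] F, ‖S‖ ≤ 1 ∧ T = ‖T‖ • S :=
    ⟨‖T‖⁻¹ • T, by rw [norm_smul, norm_inv, norm_norm, inv_mul_cancel₀ hc.ne'],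
      (smul_inv_smul₀ hc.ne' T).symm⟩
  have hX : 0 ≤ X := nonneg_of_adjoint_comp_comp_le hY hYX
  generalize ‖T‖ = c at *
  subst hTS
  rw [adjoint_smul_comp_comp_smul] at hYX ⊢
  have hYX' : S† ∘L Y ∘L S ≤ (c ^ 2)⁻¹ • X := by
    rw [← inv_smul_smul₀ (pow_ne_zero 2 hc.ne') (S† ∘L Y ∘L S)]
    gcongr
  have hcp : c ^ 2 * ((c ^ 2)⁻¹) ^ p = (c ^ (1 - p)) ^ 2 := by
    rw [Real.rpow_sub hc, Real.rpow_one, Real.inv_rpow (by positivity), ← Real.rpow_pow_comm hc.le,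
      div_pow, div_eq_mul_inv]
  calc c ^ 2 • (S† ∘L (Y ^ p) ∘L S)
    _ ≤ c ^ 2 • ((c ^ 2)⁻¹ • X) ^ p := by
      gcongr
      exact adjoint_comp_rpow_comp_le_rpow hS hY hYX' hp
    _ = (c ^ (1 - p)) ^ 2 • X ^ p := by
      rw [smul_rpow_of_nonneg hX (by positivity) hp.1.le, smul_smul, hcp]

theorem adjoint_comp_sq_comp_le_sq_smul_sq_iff {A : E →L[ℂ] E} {B : F →L[ℂ] F}
    (hA : IsSelfAdjoint A) (hB : IsSelfAdjoint B) (T : E →L[ℂ] F) {c : ℝ} (hc : 0 ≤ c) :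
    T† ∘L (B ^ 2) ∘L T ≤ c ^ 2 • A ^ 2 ↔ ∀ u, ‖B (T u)‖ ≤ c * ‖A u‖ := by
  have hrhs (u : E) : (c ^ 2 • A ^ 2).reApplyInnerSelf u = (c * ‖A u‖) ^ 2 := by
    rw [RCLike.real_smul_eq_coe_smul (K := ℂ), reApplyInnerSelf_ofReal_smul,
      reApplyInnerSelf_sq hA, mul_pow]
  rw [le_iff_forall_reApplyInnerSelf_le ((hB.pow 2).adjoint_conj T)
    ((IsSelfAdjoint.all (c ^ 2)).smul (hA.pow 2))]
  refine forall_congr' fun u ↦ ?_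
  rw [reApplyInnerSelf_adjoint_comp_comp, reApplyInnerSelf_sq hB, hrhs,
    sq_le_sq₀ (norm_nonneg _) (by positivity)]

end Operator

/-- **Heinz–Kato inequality** (bounded-operator form, Theorem 1 of the paper).
If `A`, `B` are bounded nonnegative selfadjoint operators on complex Hilbert spaces
`H₁`, `H₂`, and `T : H₁ →L[ℂ] H₂` satisfies `‖B (T u)‖ ≤ M * ‖A u‖` for all `u`,
then for every `a ∈ (0,1)` one has `‖B^a (T u)‖ ≤ M^a * ‖T‖^(1-a) * ‖A^a u‖`,
where the fractional powers are given by the continuous functional calculus. -/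
theorem heinz_kato
    {H₁ H₂ : Type*} [NormedAddCommGroup H₁] [InnerProductSpace ℂ H₁] [CompleteSpace H₁]
    [NormedAddCommGroup H₂] [InnerProductSpace ℂ H₂] [CompleteSpace H₂]
    (A : H₁ →L[ℂ] H₁) (B : H₂ →L[ℂ] H₂) (T : H₁ →L[ℂ] H₂)
    (hA : 0 ≤ A) (hB : 0 ≤ B)
    (M : ℝ) (hM : 0 ≤ M)
    (hT : ∀ u : H₁, ‖B (T u)‖ ≤ M * ‖A u‖)
    (a : ℝ) (ha : a ∈ Set.Ioo (0 : ℝ) 1) :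
    ∀ u : H₁, ‖(B ^ a) (T u)‖ ≤ M ^ a * ‖T‖ ^ (1 - a) * ‖(A ^ a) u‖ := by
  have hBA : T† ∘L (B ^ 2) ∘L T ≤ M ^ 2 • A ^ 2 :=
    (adjoint_comp_sq_comp_le_sq_smul_sq_iff hA.isSelfAdjoint hB.isSelfAdjoint T hM).2 hT
  have hA2 : 0 ≤ A ^ 2 := hA.isSelfAdjoint.sq_nonneg
  have hB2 : 0 ≤ B ^ 2 := hB.isSelfAdjoint.sq_nonneg
  have hpow := adjoint_comp_rpow_comp_le_norm_rpow_smul_rpow hB2 hBA ha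
  rw [smul_rpow_of_nonneg hA2 (sq_nonneg M) ha.1.le, sq_rpow_eq_rpow_sq hA ha.1.le,
    sq_rpow_eq_rpow_sq hB ha.1.le, ← Real.rpow_pow_comm hM, smul_smul, ← mul_pow,
    mul_comm (‖T‖ ^ _)] at hpow
  exact (adjoint_comp_sq_comp_le_sq_smul_sq_iff CFC.rpow_nonneg.isSelfAdjoint
    CFC.rpow_nonneg.isSelfAdjoint T (by positivity)).1 hpow
end

section
/- Let 𝒜 be a unital C*-algebra, let a, b be positive elements of 𝒜, let t ∈ 𝒜, and let M ≥ 0 satisfy the operator inequality t* b² t ≤ M² a². Then for every α ∈ (0,1) one has t* b^{2α} t ≤ M^{2α} · ‖t‖^{2(1−α)} · a^{2α}, where the fractional powers are given by the continuous functional calculus (real powers of nonnegative elements). -/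
/-!
For invertible `a` and `b`, the entire function `F z = b ^ (z / 2) * t * a ^ (-z / 2)` satisfies
`‖F z‖ = ‖F (re z)‖`, since imaginary powers of positive elements are unitary. As
`star t * b ^ p * t ≤ c • a ^ p` says exactly that `‖F p‖ ^ 2 ≤ c`, Hadamard's three lines theorem
interpolates between the exponents `p = 0`, where the constant is `‖t‖ ^ 2`, and `p = 1`.
Perturbing `a` and `b` by small scalars removes the invertibility assumption.
-/

open Filter Topology

section Interpolation

open NormedSpace Complex

variable {𝒜 : Type*} [CStarAlgebra 𝒜]

theorem norm_exp_smul_mul_mul_exp_smul {h k : 𝒜} (hh : IsSelfAdjoint h) (hk : IsSelfAdjoint k)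
    (t : 𝒜) (z : ℂ) :
    ‖exp (z • h) * t * exp (z • k)‖ = ‖exp (z.re • h) * t * exp (z.re • k)‖ := by
  let +nondep : NormedAlgebra ℚ 𝒜 := .restrictScalars ℚ ℂ 𝒜
  have unitary_exp {g : 𝒜} (hg : IsSelfAdjoint g) : exp ((z.im * I) • g) ∈ unitary 𝒜 :=
    exp_mem_unitary_of_mem_skewAdjoint (hg.smul_mem_skewAdjoint (by simp [skewAdjoint.mem_iff]))
  have exp_split (g : 𝒜) :
      exp (z • g) = exp (z.re • g) * exp ((z.im * I) • g) ∧
        exp (z • g) = exp ((z.im * I) • g) * exp (z.re • g) := by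
    have hcomm : Commute ((z.re : ℂ) • g) ((z.im * I) • g) :=
      ((Commute.refl g).smul_left _).smul_right _
    rw [← coe_smul z.re g, ← exp_add_of_commute hcomm, ← exp_add_of_commute hcomm.symm, ← add_smul,
      ← add_smul, add_comm _ (z.re : ℂ), re_add_im, and_self]
  calc ‖exp (z • h) * t * exp (z • k)‖
      = ‖exp ((z.im * I) • h) * (exp (z.re • h) * t * exp (z.re • k)) * exp ((z.im * I) • k)‖ := by
        rw [(exp_split h).2, (exp_split k).1]; simp only [mul_assoc]
    _ = ‖exp (z.re • h) * t * exp (z.re • k)‖ := by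
        rw [CStarRing.norm_mul_mem_unitary _ (unitary_exp hk),
          CStarRing.norm_mem_unitary_mul _ (unitary_exp hh)]

theorem norm_exp_smul_mul_mul_exp_smul_le {h k : 𝒜} (hh : IsSelfAdjoint h) (hk : IsSelfAdjoint k)
    (t : 𝒜) {s : ℝ} (hs : s ∈ Set.Icc 0 1) :
    ‖exp (s • h) * t * exp (s • k)‖ ≤ ‖t‖ ^ (1 - s) * ‖exp h * t * exp k‖ ^ s := by
  let F : ℂ → 𝒜 := fun z ↦ exp (z • h) * t * exp (z • k)
  have hF_re (z : ℂ) : ‖F z‖ = ‖F z.re‖ := by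
    simpa only [F, coe_smul] using norm_exp_smul_mul_mul_exp_smul hh hk t z
  have hF : Differentiable ℂ F := by fun_prop
  have hF_bdd : BddAbove ((norm ∘ F) '' HadamardThreeLines.verticalClosedStrip 0 1) := by
    have hcont : Continuous fun x : ℝ ↦ ‖F x‖ := by have := hF.continuous; fun_prop
    refine ((isCompact_Icc (a := (0 : ℝ)) (b := 1)).image hcont).bddAbove.mono ?_
    rintro _ ⟨z, hz, rfl⟩
    exact ⟨z.re, hz, (hF_re z).symm⟩
  have hF_zero (z : ℂ) (hz : z.re = 0) : ‖F z‖ ≤ ‖t‖ := by rw [hF_re, hz]; simp [F]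
  have hF_one (z : ℂ) (hz : z.re = 1) : ‖F z‖ ≤ ‖exp h * t * exp k‖ := by rw [hF_re, hz]; simp [F]
  have hs_mem : (s : ℂ) ∈ HadamardThreeLines.verticalClosedStrip 0 1 := hs
  simpa [F] using HadamardThreeLines.norm_le_interp_of_mem_verticalClosedStrip₀₁' F hs_mem
    hF.diffContOnCl hF_bdd hF_zero hF_one

end Interpolation

section Powers

variable {𝒜 : Type*} [CStarAlgebra 𝒜] [PartialOrder 𝒜] [StarOrderedRing 𝒜]

theorem rpow_eq_exp_smul_log {a : 𝒜} (ha : IsStrictlyPositive a) (s : ℝ) :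
    a ^ s = NormedSpace.exp (s • CFC.log a) := by
  have hne : ∀ x ∈ spectrum ℝ a, x ≠ 0 := by grind
  have hlog : ContinuousOn Real.log (spectrum ℝ a) := by fun_prop
  rw [CFC.rpow_eq_cfc_real ha.nonneg, CFC.log, ← cfc_smul s Real.log a,
    ← CFC.real_exp_eq_normedSpace_exp, ← cfc_comp' Real.exp (fun x ↦ s • Real.log x) a]
  refine cfc_congr fun x hx ↦ ?_
  simp only [Real.rpow_def_of_pos (ha.spectrum_pos hx), smul_eq_mul, mul_comm]

theorem norm_rpow_mul_mul_rpow_le {a b : 𝒜} (ha : IsStrictlyPositive a)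
    (hb : IsStrictlyPositive b) (t : 𝒜) {s : ℝ} (hs : s ∈ Set.Icc 0 1) :
    ‖b ^ s * t * a ^ s‖ ≤ ‖t‖ ^ (1 - s) * ‖b * t * a‖ ^ s := by
  simpa only [rpow_eq_exp_smul_log ha, rpow_eq_exp_smul_log hb, CFC.exp_log a, CFC.exp_log b] using
    norm_exp_smul_mul_mul_exp_smul_le (.log (a := b)) (.log (a := a)) t hs

theorem star_mul_self_le_smul_star_mul_self_iff {u : 𝒜} (hu : IsUnit u) (x : 𝒜) {c : ℝ}
    (hc : 0 ≤ c) : star (x * u) * (x * u) ≤ c • (star u * u) ↔ ‖x‖ ^ 2 ≤ c := by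
  have hconj : c • (star u * u) - star (x * u) * (x * u)
      = star u * (algebraMap ℝ 𝒜 c - star x * x) * u := by
    simp only [Algebra.algebraMap_eq_smul_one, star_mul, mul_sub, sub_mul, mul_smul_comm,
      smul_mul_assoc, mul_one, mul_assoc]
  rw [← sub_nonneg, hconj, hu.star_left_conjugate_nonneg_iff, sub_nonneg,
    ← CStarAlgebra.norm_le_iff_le_algebraMap _ hc (star_mul_self_nonneg x),
    CStarRing.norm_star_mul_self, sq]

theorem star_mul_rpow_mul_le_smul_rpow_iff {a b : 𝒜} (ha : IsStrictlyPositive a)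
    (hb : IsStrictlyPositive b) (t : 𝒜) (p : ℝ) {c : ℝ} (hc : 0 ≤ c) :
    star t * b ^ p * t ≤ c • a ^ p ↔ ‖b ^ (p / 2) * t * a ^ (-(p / 2))‖ ^ 2 ≤ c := by
  have star_mul_half {w : 𝒜} (hw : IsStrictlyPositive w) :
      star (w ^ (p / 2)) * w ^ (p / 2) = w ^ p := by
    rw [CFC.rpow_nonneg.star_eq, ← CFC.rpow_add hw.isUnit, add_halves]
  have hcancel : b ^ (p / 2) * t * a ^ (-(p / 2)) * a ^ (p / 2) = b ^ (p / 2) * t := by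
    rw [mul_assoc, CFC.rpow_neg_mul_rpow (p / 2), mul_one]
  rw [← star_mul_self_le_smul_star_mul_self_iff (ha.rpow _ (p / 2)).isUnit _ hc, hcancel, star_mul,
    star_mul_half ha, ← star_mul_half hb]
  simp only [mul_assoc]

theorem star_mul_rpow_mul_le_of_isStrictlyPositive {a b t : 𝒜} (ha : IsStrictlyPositive a)
    (hb : IsStrictlyPositive b) {c : ℝ} (hc : 0 ≤ c) (h : star t * b * t ≤ c • a)
    {p : ℝ} (hp : p ∈ Set.Icc 0 1) :
    star t * b ^ p * t ≤ (c ^ p * (‖t‖ ^ 2) ^ (1 - p)) • a ^ p := by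
  have hone : ‖b ^ (1 / 2 : ℝ) * t * a ^ (-(1 / 2) : ℝ)‖ ^ 2 ≤ c :=
    (star_mul_rpow_mul_le_smul_rpow_iff ha hb t 1 hc).1 <| by
      rwa [CFC.rpow_one a, CFC.rpow_one b]
  have hinterp : ‖b ^ (p / 2) * t * a ^ (-(p / 2))‖
      ≤ ‖t‖ ^ (1 - p) * ‖b ^ (1 / 2 : ℝ) * t * a ^ (-(1 / 2) : ℝ)‖ ^ p := by
    have := norm_rpow_mul_mul_rpow_le (ha.rpow _ (-(1 / 2))) (hb.rpow _ (1 / 2)) t hp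
    rwa [CFC.rpow_rpow b _ _ (by norm_num), CFC.rpow_rpow a _ _ (by norm_num),
      one_div_mul_eq_div, neg_mul, one_div_mul_eq_div] at this
  rw [star_mul_rpow_mul_le_smul_rpow_iff ha hb t p (by positivity)]
  calc ‖b ^ (p / 2) * t * a ^ (-(p / 2))‖ ^ 2
      ≤ (‖t‖ ^ (1 - p) * ‖b ^ (1 / 2 : ℝ) * t * a ^ (-(1 / 2) : ℝ)‖ ^ p) ^ 2 := by gcongr
    _ = (‖b ^ (1 / 2 : ℝ) * t * a ^ (-(1 / 2) : ℝ)‖ ^ 2) ^ p * (‖t‖ ^ 2) ^ (1 - p) := by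
      rw [mul_pow, Real.rpow_pow_comm (norm_nonneg _), Real.rpow_pow_comm (norm_nonneg _), mul_comm]
    _ ≤ c ^ p * (‖t‖ ^ 2) ^ (1 - p) := by gcongr; exact hp.1

theorem continuousOn_rpow_const_nonneg {p : ℝ} (hp : 0 ≤ p) :
    ContinuousOn (· ^ p) {a : 𝒜 | 0 ≤ a} := by
  obtain rfl | hp := hp.eq_or_lt
  · exact continuousOn_const.congr CFC.rpow_zero_eqOn
  · lift p to NNReal using hp.le
    simpa only [CFC.nnrpow_eq_rpow (NNReal.coe_pos.1 hp)] using CFC.continuousOn_nnrpow (A := 𝒜) p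

theorem tendsto_add_algebraMap_rpow {a : 𝒜} (ha : 0 ≤ a) {p : ℝ} (hp : 0 ≤ p) :
    Tendsto (fun ε : ℝ ↦ (a + algebraMap ℝ 𝒜 ε) ^ p) (𝓝[≥] 0) (𝓝 (a ^ p)) := by
  have hadd : ContinuousOn (fun ε : ℝ ↦ a + algebraMap ℝ 𝒜 ε) (Set.Ici 0) := by fun_prop
  have hnonneg : Set.MapsTo (fun ε : ℝ ↦ a + algebraMap ℝ 𝒜 ε) (Set.Ici 0) {x | 0 ≤ x} :=
    fun ε hε ↦ add_nonneg ha (algebraMap_nonneg 𝒜 hε)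
  simpa [Function.comp_def] using
    ((continuousOn_rpow_const_nonneg hp).comp hadd hnonneg 0 Set.self_mem_Ici).tendsto

-- Moving `b` by only `ε ^ 2` makes the error `ε ^ 2 * ‖t‖ ^ 2` fit under the `ε` added to `a`, at
-- the cost of changing the constant by `ε * ‖t‖ ^ 2`.
theorem star_mul_add_algebraMap_sq_mul_le {a b t : 𝒜} (ha : 0 ≤ a) {c : ℝ} (hc : 0 ≤ c)
    (h : star t * b * t ≤ c • a) {ε : ℝ} (hε : 0 ≤ ε) :
    star t * (b + algebraMap ℝ 𝒜 (ε ^ 2)) * t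
      ≤ (c + ε * ‖t‖ ^ 2) • (a + algebraMap ℝ 𝒜 ε) := by
  calc star t * (b + algebraMap ℝ 𝒜 (ε ^ 2)) * t = star t * b * t + ε ^ 2 • (star t * t) := by
        simp only [Algebra.algebraMap_eq_smul_one, mul_add, add_mul, mul_smul_comm, smul_mul_assoc,
          mul_one]
    _ ≤ c • a + ε ^ 2 • algebraMap ℝ 𝒜 (‖t‖ ^ 2) := by
        gcongr
        exact CStarAlgebra.star_mul_le_algebraMap_norm_sq
    _ ≤ c • a + ε ^ 2 • algebraMap ℝ 𝒜 (‖t‖ ^ 2) + ((ε * ‖t‖ ^ 2) • a + algebraMap ℝ 𝒜 (c * ε)) :=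
        le_add_of_nonneg_right <|
          add_nonneg (smul_nonneg (by positivity) ha) (algebraMap_nonneg 𝒜 (by positivity))
    _ = (c + ε * ‖t‖ ^ 2) • (a + algebraMap ℝ 𝒜 ε) := by
        simp only [Algebra.algebraMap_eq_smul_one]
        module

theorem star_mul_rpow_mul_le {a b t : 𝒜} (ha : 0 ≤ a) (hb : 0 ≤ b) {c : ℝ} (hc : 0 ≤ c)
    (h : star t * b * t ≤ c • a) {p : ℝ} (hp : p ∈ Set.Icc 0 1) :
    star t * b ^ p * t ≤ (c ^ p * (‖t‖ ^ 2) ^ (1 - p)) • a ^ p := by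
  have hconst : Tendsto (fun ε : ℝ ↦ (c + ε * ‖t‖ ^ 2) ^ p * (‖t‖ ^ 2) ^ (1 - p)) (𝓝 0)
      (𝓝 (c ^ p * (‖t‖ ^ 2) ^ (1 - p))) := by
    refine Continuous.tendsto' ?_ _ _ (by simp)
    have := Real.continuous_rpow_const hp.1
    fun_prop
  refine ge_of_tendsto ((hconst.mono_left nhdsWithin_le_nhds).smul
    ((tendsto_add_algebraMap_rpow ha hp.1).mono_left (nhdsWithin_mono _ Set.Ioi_subset_Ici_self)))
    (eventually_mem_nhdsWithin.mono fun ε (hε : 0 < ε) ↦ ?_)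
  have hε_pos : IsStrictlyPositive (algebraMap ℝ 𝒜 ε) := isStrictlyPositive_algebraMap hε
  have hε_sq_pos : IsStrictlyPositive (algebraMap ℝ 𝒜 (ε ^ 2)) :=
    isStrictlyPositive_algebraMap (by positivity)
  calc star t * b ^ p * t ≤ star t * (b + algebraMap ℝ 𝒜 (ε ^ 2)) ^ p * t :=
        star_left_conjugate_le_conjugate
          (CFC.rpow_le_rpow hp (le_add_of_nonneg_right hε_sq_pos.nonneg)) t
    _ ≤ ((c + ε * ‖t‖ ^ 2) ^ p * (‖t‖ ^ 2) ^ (1 - p)) • (a + algebraMap ℝ 𝒜 ε) ^ p :=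
        star_mul_rpow_mul_le_of_isStrictlyPositive (hε_pos.nonneg_add ha) (hε_sq_pos.nonneg_add hb)
          (by positivity) (star_mul_add_algebraMap_sq_mul_le ha hc h hε.le) hp

theorem rpow_two_mul {a : 𝒜} (ha : 0 ≤ a) {p : ℝ} (hp : 0 ≤ p) : a ^ (2 * p) = (a ^ 2) ^ p := by
  rw [← CFC.rpow_natCast a 2, CFC.rpow_rpow_of_exponent_nonneg a _ _ (by positivity) hp,
    Nat.cast_ofNat]

end Powers

/-- **Heinz–Kato inequality, C*-algebra quadratic-form version.**
If `a`, `b` are positive elements of a unital C*-algebra `𝒜`, `t ∈ 𝒜` and `M ≥ 0`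
satisfy `t* b² t ≤ M² a²`, then for every `α ∈ (0,1)` one has
`t* b^(2α) t ≤ M^(2α) ‖t‖^(2(1-α)) a^(2α)`, where the fractional powers are given
by the continuous functional calculus. -/
theorem heinz_kato_cstar
    {𝒜 : Type*} [CStarAlgebra 𝒜] [PartialOrder 𝒜] [StarOrderedRing 𝒜]
    (a b t : 𝒜) (ha : 0 ≤ a) (hb : 0 ≤ b)
    (M : ℝ) (hM : 0 ≤ M)
    (h : star t * b ^ 2 * t ≤ (M ^ 2) • a ^ 2)
    (α : ℝ) (hα : α ∈ Set.Ioo (0 : ℝ) 1) :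
    star t * b ^ (2 * α) * t ≤ (M ^ (2 * α) * ‖t‖ ^ (2 * (1 - α))) • a ^ (2 * α) := by
  rw [rpow_two_mul ha hα.1.le, rpow_two_mul hb hα.1.le, Real.rpow_mul hM,
    Real.rpow_mul (norm_nonneg t), Real.rpow_two, Real.rpow_two]
  exact star_mul_rpow_mul_le (IsSelfAdjoint.of_nonneg ha).sq_nonneg
    (IsSelfAdjoint.of_nonneg hb).sq_nonneg (sq_nonneg M) h (Set.Ioo_subset_Icc_self hα)
end
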